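/- Let K be a number field with r₁ real places (r₁ > 0) and r₂ complex places, and let Z⁺ = Z ∩ Kˣ⁺ be the group of totally positive singular elements of K. Then dim_{F₂}(Z⁺/Kˣ²) = ρ⁺ + r₂, where ρ⁺ = rk₂(C_K⁺) is the 2-rank of the narrow class group of K. -/

import Mathlib

open NumberField FractionalIdeal
open scoped nonZeroDivisors

variable (K : Type*) [Field K] [NumberField K]

/-- The group of singular elements of `K`: those `z ∈ Kˣ` whose principal fractional ideal
is the square of a fractional ideal. -/
noncomputable def singularSubgroup : Subgroup Kˣ where
  carrier := {z : Kˣ | ∃ a : FractionalIdeal (𝓞 K)⁰ K,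
    spanSingleton (𝓞 K)⁰ (z : K) = a ^ 2}
  one_mem' := ⟨1, by simp⟩
  mul_mem' := by
    rintro x y ⟨a, ha⟩ ⟨b, hb⟩
    exact ⟨a * b, by rw [Units.val_mul, ← spanSingleton_mul_spanSingleton, ha, hb, mul_pow]⟩
  inv_mem' := by
    rintro x ⟨a, ha⟩
    refine ⟨a⁻¹, ?_⟩
    rw [Units.val_inv_eq_inv_val, ← spanSingleton_inv, ha, inv_pow]

/-- The subgroup `Kˣ²` of squares in `Kˣ`. -/
def squaresSubgroup : Subgroup Kˣ := (powMonoidHom 2 : Kˣ →* Kˣ).range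

/-- The subgroup `Kˣ⁺` of totally positive elements of `Kˣ`. -/
def totPosSubgroup : Subgroup Kˣ where
  carrier := {x : Kˣ | ∀ φ : K →+* ℝ, 0 < φ (x : K)}
  one_mem' := fun φ => by simp
  mul_mem' := by
    intro x y hx hy φ
    rw [Units.val_mul, _root_.map_mul]
    exact mul_pos (hx φ) (hy φ)
  inv_mem' := by
    intro x hx φ
    rw [Units.val_inv_eq_inv_val, map_inv₀]
    exact inv_pos.mpr (hx φ)

/-- The subgroup `P_K⁺` of the group of invertible fractional ideals consisting of principal
fractional ideals generated by a totally positive element. -/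
noncomputable def totPosPrincipalSubgroup : Subgroup (FractionalIdeal (𝓞 K)⁰ K)ˣ where
  carrier := {I | ∃ x : Kˣ, (∀ φ : K →+* ℝ, 0 < φ (x : K)) ∧
    (I : FractionalIdeal (𝓞 K)⁰ K) = spanSingleton (𝓞 K)⁰ (x : K)}
  one_mem' := ⟨1, fun φ => by simp, by simp⟩
  mul_mem' := by
    rintro I J ⟨x, hx, hI⟩ ⟨y, hy, hJ⟩
    refine ⟨x * y, fun φ => ?_, ?_⟩
    · rw [Units.val_mul, _root_.map_mul]; exact mul_pos (hx φ) (hy φ)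
    · rw [Units.val_mul, hI, hJ, spanSingleton_mul_spanSingleton, Units.val_mul]
  inv_mem' := by
    rintro I ⟨x, hx, hI⟩
    refine ⟨x⁻¹, fun φ => ?_, ?_⟩
    · rw [Units.val_inv_eq_inv_val, map_inv₀]; exact inv_pos.mpr (hx φ)
    · rw [Units.val_inv_eq_inv_val, hI, spanSingleton_inv, Units.val_inv_eq_inv_val]

/-- The narrow (strict) class group `C_K⁺ = I_K/P_K⁺` of the number field `K`. -/
noncomputable abbrev NarrowClassGroup :=
  (FractionalIdeal (𝓞 K)⁰ K)ˣ ⧸ totPosPrincipalSubgroup K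

/-- The group `Z⁺/Kˣ²` of classes of totally positive singular elements modulo squares. -/
noncomputable abbrev ZPlusModSquares :=
  (singularSubgroup K ⊓ totPosSubgroup K : Subgroup Kˣ) ⧸
    (squaresSubgroup K).subgroupOf (singularSubgroup K ⊓ totPosSubgroup K)

/-!
Let `f : Kˣ → I_K` send an element to its principal fractional ideal. Since squaring is injective
on `I_K`, counting along `f` gives
`[Z⁺ : Kˣ²] · [Kˣ : Kˣ⁺] = #C_K⁺[2] · [𝓞ˣ : 𝓞ˣ²]`.
Weak approximation at the infinite places gives `[Kˣ : Kˣ⁺] = 2 ^ r₁`, and Dirichlet's unit theorem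
gives `[𝓞ˣ : 𝓞ˣ²] = 2 ^ (r₁ + r₂)`, the torsion contributing a factor `2` because of `-1`.
Cancelling `2 ^ r₁` leaves the result.
-/

theorem map_comap_inf_eq_inf_map {G A : Type*} [Group G] [Group A] (f : G →* A)
    (H : Subgroup A) (P : Subgroup G) : (H.comap f ⊓ P).map f = H ⊓ P.map f :=
  SetLike.coe_injective (Set.image_preimage_inter f P H)

section CommGroup

variable {G A : Type*} [CommGroup G] [CommGroup A]

theorem relIndex_map_mul_relIndex_inf_ker {B : Type*} [Group B] (f : G →* B)
    {H L : Subgroup G} (hHL : H ≤ L) :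
    (H.map f).relIndex (L.map f) * H.relIndex (L ⊓ f.ker) = H.relIndex L := by
  have modular_law : (H ⊔ f.ker) ⊓ L = H ⊔ L ⊓ f.ker := by
    rw [sup_inf_assoc_of_le _ hHL, inf_comm]
  rw [← Subgroup.relIndex_comap, Subgroup.comap_map_eq,
    ← Subgroup.relIndex_sup_left (L ⊓ f.ker) H, ← modular_law, mul_comm,
    Subgroup.relIndex_inf_mul_relIndex, inf_eq_left.mpr le_sup_left]

theorem card_quotient_pow_eq_one (N : Subgroup A) (n : ℕ) :
    Nat.card {c : A ⧸ N // c ^ n = 1} = N.relIndex (N.comap (powMonoidHom n)) := by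
  have pow_eq_one_iff (c : A ⧸ N) :
      c ^ n = 1 ↔ c ∈ (N.comap (powMonoidHom n)).map (QuotientGroup.mk' N) := by
    constructor
    · obtain ⟨a, rfl⟩ := QuotientGroup.mk'_surjective N c
      exact fun hc => ⟨a, (QuotientGroup.eq_one_iff (a ^ n)).mp hc, rfl⟩
    · rintro ⟨a, ha, rfl⟩
      exact (QuotientGroup.eq_one_iff (a ^ n)).mpr ha
  rw [Nat.card_congr (Equiv.subtypeEquivRight pow_eq_one_iff)]
  simpa using! (Subgroup.relIndex_ker (K := N.comap (powMonoidHom n)) (QuotientGroup.mk' N)).symm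

theorem map_map_powMonoidHom (f : G →* A) (H : Subgroup G) (n : ℕ) :
    (H.map (powMonoidHom n)).map f = (H.map f).map (powMonoidHom n) := by
  simp_rw [Subgroup.map_map]
  congr 1
  ext x
  simp

/- Injectivity of `a ↦ aⁿ` identifies `f G / f P` with `(f G)ⁿ / (f P)ⁿ`, and the `n`-torsion of
`A / f P` with `(Aⁿ ⊓ f P) / (f P)ⁿ`. -/
theorem relIndex_range_pow_mul_index (f : G →* A) {n : ℕ}
    (hA : Function.Injective (powMonoidHom n : A →* A)) {P : Subgroup G}
    (hP : (powMonoidHom n : G →* G).range ≤ P) :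
    (powMonoidHom n : G →* G).range.relIndex ((powMonoidHom n : A →* A).range.comap f ⊓ P) *
        P.index =
      (P.map f).relIndex ((P.map f).comap (powMonoidHom n)) *
        (powMonoidHom n : G →* G).range.relIndex f.ker := by
  set Gn := (powMonoidHom n : G →* G).range with hGn
  set Z := (powMonoidHom n : A →* A).range.comap f ⊓ P with hZ
  have map_Gn : Gn.map f = f.range.map (powMonoidHom n) := by
    rw [hGn, MonoidHom.range_eq_map, MonoidHom.range_eq_map, map_map_powMonoidHom]
  have map_Gn_le : Gn.map f ≤ (powMonoidHom n : A →* A).range :=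
    map_Gn ▸ Subgroup.map_le_range _ _
  have Gn_le_Z : Gn ≤ Z := le_inf (Subgroup.map_le_iff_le_comap.mp map_Gn_le) hP
  have Z_inf_ker : Z ⊓ f.ker = P ⊓ f.ker := by
    rw [hZ, inf_right_comm, inf_eq_right.mpr (Subgroup.ker_le_comap f _), inf_comm]
  have relIndex_Z := relIndex_map_mul_relIndex_inf_ker f Gn_le_Z
  have index_P : (P.map f).relIndex f.range * P.relIndex f.ker = P.index := by
    have := relIndex_map_mul_relIndex_inf_ker f (le_top : P ≤ ⊤)
    rwa [← MonoidHom.range_eq_map, top_inf_eq, Subgroup.relIndex_top_right] at this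
  have tower_ker : Gn.relIndex (Z ⊓ f.ker) * P.relIndex f.ker = Gn.relIndex f.ker := by
    rw [Z_inf_ker, Subgroup.relIndex_inf_mul_relIndex, inf_eq_left.mpr hP]
  have relIndex_comap : (P.map f).relIndex ((P.map f).comap (powMonoidHom n)) =
      ((P.map f).map (powMonoidHom n)).relIndex (Z.map f) := by
    rw [← Subgroup.relIndex_map_map_of_injective _ _ hA, Subgroup.map_comap_eq, hZ,
      map_comap_inf_eq_inf_map]
  have tower_map : (P.map f).relIndex f.range * (Gn.map f).relIndex (Z.map f) =
      ((P.map f).map (powMonoidHom n)).relIndex (Z.map f) := by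
    rw [← Subgroup.relIndex_map_map_of_injective _ _ hA, ← map_Gn]
    exact Subgroup.relIndex_mul_relIndex _ _ _
      (map_Gn ▸ Subgroup.map_mono (Subgroup.map_le_range f P)) (Subgroup.map_mono Gn_le_Z)
  rw [← relIndex_Z, ← index_P, relIndex_comap, ← tower_map, ← tower_ker]
  ring

theorem index_range_pow_of_free [Module.Free ℤ (Additive G)] [Module.Finite ℤ (Additive G)]
    (n : ℕ) :
    (powMonoidHom n : G →* G).range.index = n ^ Module.finrank ℤ (Additive G) := by
  rw [← AddSubgroup.index_range_nsmul, ← Subgroup.index_toAddSubgroup]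
  rfl

theorem subgroupOf_torsion_range_pow {n : ℕ} (hn : n ≠ 0) :
    (powMonoidHom n : G →* G).range.subgroupOf (CommGroup.torsion G) =
      (powMonoidHom n : CommGroup.torsion G →* CommGroup.torsion G).range := by
  ext ⟨x, hx⟩
  rw [Subgroup.mem_subgroupOf]
  constructor
  · rintro ⟨y, rfl⟩
    exact ⟨⟨y, (isOfFinOrder_pow.mp hx).resolve_right hn⟩, rfl⟩
  · rintro ⟨y, hy⟩
    exact ⟨y, congrArg Subtype.val hy⟩

theorem index_range_pow_eq_mul_torsion {n : ℕ} (hn : n ≠ 0) :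
    (powMonoidHom n : G →* G).range.index =
      (powMonoidHom n : G ⧸ CommGroup.torsion G →* G ⧸ CommGroup.torsion G).range.index *
        (powMonoidHom n : CommGroup.torsion G →* CommGroup.torsion G).range.index := by
  have h := relIndex_map_mul_relIndex_inf_ker (QuotientGroup.mk' (CommGroup.torsion G))
    (le_top : (powMonoidHom n : G →* G).range ≤ ⊤)
  rw [Subgroup.map_top_of_surjective _ (QuotientGroup.mk'_surjective _), top_inf_eq,
    QuotientGroup.ker_mk', Subgroup.relIndex_top_right, Subgroup.relIndex_top_right,
    MonoidHom.range_eq_map, map_map_powMonoidHom,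
    Subgroup.map_top_of_surjective _ (QuotientGroup.mk'_surjective _),
    ← MonoidHom.range_eq_map, ← MonoidHom.range_eq_map] at h
  rw [← subgroupOf_torsion_range_pow hn, ← h, Subgroup.relIndex]

end CommGroup

section FractionalIdeal

variable (R F : Type*) [CommRing R] [Field F] [Algebra R F] [IsFractionRing R F]

theorem ker_toPrincipalIdeal [IsDomain R] :
    (toPrincipalIdeal R F).ker = (Units.map (algebraMap R F : R →* F)).range := by
  ext x
  rw [MonoidHom.mem_ker, toPrincipalIdeal_eq_iff, Units.val_one, ← spanSingleton_one, eq_comm,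
    spanSingleton_eq_spanSingleton]
  exact exists_congr fun u => by simp [Units.ext_iff, Units.smul_def, Algebra.smul_def]

variable [IsIntegrallyClosed R]

theorem comap_algebraMap_range_pow {n : ℕ} (hn : n ≠ 0) :
    (powMonoidHom n : Fˣ →* Fˣ).range.comap (Units.map (algebraMap R F : R →* F)) =
      (powMonoidHom n : Rˣ →* Rˣ).range := by
  ext u
  constructor
  · rintro ⟨y, hy⟩
    have hy : (y : F) ^ n = algebraMap R F u := congrArg Units.val hy
    obtain ⟨a, ha⟩ := IsIntegrallyClosed.exists_algebraMap_eq_of_isIntegral_pow (R := R)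
      (Nat.pos_of_ne_zero hn) (hy ▸ isIntegral_algebraMap)
    have hau : a ^ n = u := by
      apply FaithfulSMul.algebraMap_injective R F
      rw [_root_.map_pow, ha, hy]
    obtain ⟨v, rfl⟩ : IsUnit a := (isUnit_pow_iff hn).mp (hau ▸ u.isUnit)
    exact ⟨v, Units.ext hau⟩
  · rintro ⟨v, rfl⟩
    exact ⟨Units.map (algebraMap R F : R →* F) v, by simp⟩

variable {R F} in
theorem fractionalIdeal_le_one_of_pow_le_one {I : FractionalIdeal R⁰ F} {n : ℕ} (hn : n ≠ 0)
    (hI : I ^ n ≤ 1) : I ≤ 1 := by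
  intro x hx
  obtain ⟨y, hy⟩ : ∃ y, algebraMap R F y = x ^ n := by
    apply (mem_one_iff R⁰).mp
    apply hI
    rw [← mem_coe, coe_pow]
    exact Submodule.pow_mem_pow _ hx n
  exact (mem_one_iff _).mpr (IsIntegrallyClosed.exists_algebraMap_eq_of_isIntegral_pow
    (Nat.pos_of_ne_zero hn) (hy ▸ isIntegral_algebraMap))

theorem powMonoidHom_fractionalIdeal_injective {n : ℕ} (hn : n ≠ 0) :
    Function.Injective
      (powMonoidHom n : (FractionalIdeal R⁰ F)ˣ →* (FractionalIdeal R⁰ F)ˣ) := by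
  have le_one (I : (FractionalIdeal R⁰ F)ˣ) (hI : I ^ n = 1) : (I : FractionalIdeal R⁰ F) ≤ 1 :=
    fractionalIdeal_le_one_of_pow_le_one hn
      (by rw [← Units.val_pow_eq_pow_val, hI, Units.val_one])
  rw [injective_iff_map_eq_one]
  intro I hI
  have one_le : 1 ≤ (I : FractionalIdeal R⁰ F) := by
    calc (1 : FractionalIdeal R⁰ F) = I * (I⁻¹ : (FractionalIdeal R⁰ F)ˣ) := I.mul_inv.symm
      _ ≤ I * 1 := by gcongr; exact le_one I⁻¹ (by rw [inv_pow, ← powMonoidHom_apply, hI, inv_one])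
      _ = I := mul_one _
  exact Units.ext ((le_one I hI).antisymm one_le)

theorem relIndex_range_pow_ker_toPrincipalIdeal [IsDomain R] {n : ℕ} (hn : n ≠ 0) :
    (powMonoidHom n : Fˣ →* Fˣ).range.relIndex (toPrincipalIdeal R F).ker =
      (powMonoidHom n : Rˣ →* Rˣ).range.index := by
  rw [ker_toPrincipalIdeal, ← Subgroup.index_comap, comap_algebraMap_range_pow R F hn]

end FractionalIdeal

theorem index_range_pow_units {n : ℕ} (hn : n ≠ 0) :
    (powMonoidHom n : (𝓞 K)ˣ →* (𝓞 K)ˣ).range.index =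
      n ^ Units.rank K * (Units.torsionOrder K).gcd n := by
  rw [index_range_pow_eq_mul_torsion hn]
  congr 1
  · rw [← Units.finrank_modTorsion]
    exact index_range_pow_of_free (G := (𝓞 K)ˣ ⧸ Units.torsion K) n
  · exact IsCyclic.index_powMonoidHom_range (G := Units.torsion K) n

theorem index_range_sq_units :
    (powMonoidHom 2 : (𝓞 K)ˣ →* (𝓞 K)ˣ).range.index =
      2 ^ (InfinitePlace.nrRealPlaces K + InfinitePlace.nrComplexPlaces K) := by
  have gcd_eq_two : (Units.torsionOrder K).gcd 2 = 2 :=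
    Nat.gcd_eq_right (Units.even_torsionOrder K).two_dvd
  classical
  rw [index_range_pow_units K two_ne_zero, gcd_eq_two, ← pow_succ, Units.rank,
    Nat.sub_add_cancel Fintype.card_pos, InfinitePlace.card_eq_nrRealPlaces_add_nrComplexPlaces]

section Signs

variable (F : Type*) [Field F]

variable {F} in
theorem exists_embedding_of_isReal_eq (φ : F →+* ℝ) :
    ∃ (w : InfinitePlace F) (hw : w.IsReal), InfinitePlace.embedding_of_isReal hw = φ := by
  have hφ : ComplexEmbedding.IsReal (Complex.ofRealHom.comp φ) := by
    ext y
    simp [ComplexEmbedding.conjugate_coe_eq]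
  refine ⟨.mk (Complex.ofRealHom.comp φ), InfinitePlace.isReal_mk_iff.mpr hφ, ?_⟩
  ext y
  apply Complex.ofReal_injective
  rw [InfinitePlace.embedding_of_isReal_apply, InfinitePlace.embedding_mk_eq_of_isReal hφ,
    RingHom.comp_apply, Complex.ofRealHom_eq_coe]

theorem sign_eq_of_abs_sub_lt_one {α : Type*} [Ring α] [LinearOrder α] [IsStrictOrderedRing α]
    (u : SignTypeˣ) {x : α} (h : |(u : SignType) - x| < 1) : SignType.sign x = u := by
  rw [abs_sub_lt_iff] at h
  rcases SignType.trichotomy u with hu | hu | hu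
  · rw [hu, sign_eq_neg_one_iff]
    rw [hu, SignType.coe_neg_one] at h
    simpa using h.2
  · exact absurd hu u.ne_zero
  · rw [hu, sign_eq_one_iff]
    rw [hu, SignType.coe_one] at h
    simpa using h.1

/-- The signs of an element of `Fˣ` at the real places of `F`, recorded in `SignTypeˣ = {±1}`. -/
noncomputable def realSigns : Fˣ →* ({w : InfinitePlace F // w.IsReal} → SignTypeˣ) :=
  MonoidHom.pi fun w => Units.map
    ((signHom (α := ℝ)).toMonoidHom.comp (InfinitePlace.embedding_of_isReal w.2 : F →* ℝ))

theorem val_realSigns_apply (x : Fˣ) (w : {w : InfinitePlace F // w.IsReal}) :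
    (realSigns F x w : SignType) =
      SignType.sign (InfinitePlace.embedding_of_isReal w.2 (x : F)) := rfl

theorem ker_realSigns : (realSigns F).ker = totPosSubgroup F := by
  ext x
  rw [MonoidHom.mem_ker, funext_iff]
  simp_rw [Units.ext_iff, val_realSigns_apply]
  constructor
  · intro h φ
    obtain ⟨w, hw, rfl⟩ := exists_embedding_of_isReal_eq φ
    exact sign_eq_one_iff.mp (h ⟨w, hw⟩)
  · exact fun h w => sign_eq_one_iff.mpr (h _)

theorem squaresSubgroup_le_totPosSubgroup : squaresSubgroup F ≤ totPosSubgroup F := by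
  rintro _ ⟨x, rfl⟩ φ
  have : φ (x : F) ≠ 0 := (map_ne_zero φ).mpr x.ne_zero
  simpa using sq_pos_of_ne_zero this

theorem exists_forall_infinitePlace_sub_lt (s : InfinitePlace K → K) {ε : ℝ} (hε : 0 < ε) :
    ∃ x : K, ∀ v : InfinitePlace K, v (s v - x) < ε := by
  obtain ⟨x, hx⟩ := (InfinitePlace.denseRange_algebraMap_pi K).exists_dist_lt
    (fun v => WithAbs.toAbs v.1 (s v)) hε
  refine ⟨x, fun v => ?_⟩
  have dist_lt := (dist_le_pi_dist _ _ v).trans_lt hx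
  rwa [dist_eq_norm] at dist_lt

theorem realSigns_surjective : Function.Surjective (realSigns K) := by
  classical
  intro ε
  let s (v : InfinitePlace K) : K := if hv : v.IsReal then ((ε ⟨v, hv⟩ : SignType) : K) else 1
  have place_s (v : InfinitePlace K) : v (s v) = 1 := by
    by_cases hv : v.IsReal
    · rcases SignType.trichotomy (ε ⟨v, hv⟩) with h | h | h
      · simp [s, hv, h, ← InfinitePlace.norm_embedding_eq]
      · exact absurd h (ε ⟨v, hv⟩).ne_zero
      · simp [s, hv, h]
    · simp [s, hv]
  obtain ⟨x, hx⟩ := exists_forall_infinitePlace_sub_lt K s one_pos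
  have x_ne_zero : x ≠ 0 := by
    rintro rfl
    obtain ⟨v⟩ : Nonempty (InfinitePlace K) := inferInstance
    simpa [place_s] using hx v
  refine ⟨Units.mk0 x x_ne_zero, funext fun w => Units.ext (sign_eq_of_abs_sub_lt_one _ ?_)⟩
  have embedding_s : InfinitePlace.embedding_of_isReal w.2 (s w) = (ε w : SignType) := by
    simp [s, w.2, SignType.map_cast]
  calc |((ε w : SignType) : ℝ) - InfinitePlace.embedding_of_isReal w.2 x|
      = ‖InfinitePlace.embedding_of_isReal w.2 (s w - x)‖ := by
        rw [map_sub, embedding_s, Real.norm_eq_abs]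
    _ = w.1 (s w - x) := InfinitePlace.norm_embedding_of_isReal w.2 _
    _ < 1 := hx w

theorem index_totPosSubgroup :
    (totPosSubgroup K).index = 2 ^ InfinitePlace.nrRealPlaces K := by
  have card_signs : Nat.card SignTypeˣ = 2 := by
    rw [Nat.card_eq_fintype_card]
    decide
  rw [← ker_realSigns, Subgroup.index_ker, MonoidHom.range_eq_top.mpr (realSigns_surjective K),
    Subgroup.card_top, Nat.card_fun, card_signs, InfinitePlace.nrRealPlaces,
    Fintype.card_eq_nat_card]

end Signs

theorem map_toPrincipalIdeal_totPosSubgroup :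
    (totPosSubgroup K).map (toPrincipalIdeal (𝓞 K) K) = totPosPrincipalSubgroup K := by
  ext I
  refine exists_congr fun x => and_congr_right fun _ => ?_
  rw [toPrincipalIdeal_eq_iff, eq_comm]

theorem singularSubgroup_eq_comap :
    singularSubgroup K =
      (powMonoidHom 2 : (FractionalIdeal (𝓞 K)⁰ K)ˣ →* _).range.comap
        (toPrincipalIdeal (𝓞 K) K) := by
  ext z
  constructor
  · rintro ⟨a, ha⟩
    obtain ⟨J, rfl⟩ : IsUnit a := by
      rw [← isUnit_pow_iff two_ne_zero, ← ha, ← coe_toPrincipalIdeal]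
      exact Units.isUnit _
    exact ⟨J, (toPrincipalIdeal_eq_iff.mpr ha).symm⟩
  · rintro ⟨J, hJ⟩
    exact ⟨J, toPrincipalIdeal_eq_iff.mp hJ.symm⟩

theorem zplus_mod_squares_card_general :
    Nat.card (ZPlusModSquares K) =
      Nat.card {c : NarrowClassGroup K // c ^ 2 = 1} * 2 ^ InfinitePlace.nrComplexPlaces K := by
  apply Nat.eq_of_mul_eq_mul_right (pow_pos two_pos (InfinitePlace.nrRealPlaces K))
  calc Nat.card (ZPlusModSquares K) * 2 ^ InfinitePlace.nrRealPlaces K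
      = (squaresSubgroup K).relIndex (singularSubgroup K ⊓ totPosSubgroup K) *
          (totPosSubgroup K).index := by rw [index_totPosSubgroup]; rfl
    _ = Nat.card {c : NarrowClassGroup K // c ^ 2 = 1} *
          (squaresSubgroup K).relIndex (toPrincipalIdeal (𝓞 K) K).ker := by
        rw [card_quotient_pow_eq_one, ← map_toPrincipalIdeal_totPosSubgroup,
          singularSubgroup_eq_comap]
        exact relIndex_range_pow_mul_index _
          (powMonoidHom_fractionalIdeal_injective (𝓞 K) K two_ne_zero)
          (squaresSubgroup_le_totPosSubgroup K)
    _ = Nat.card {c : NarrowClassGroup K // c ^ 2 = 1} *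
          2 ^ (InfinitePlace.nrRealPlaces K + InfinitePlace.nrComplexPlaces K) := by
        rw [squaresSubgroup, relIndex_range_pow_ker_toPrincipalIdeal _ _ two_ne_zero,
          index_range_sq_units]
    _ = _ := by ring

/-- Let `K` be a number field with `r₁ > 0` real places and `r₂` complex places, and let
`Z⁺ = Z ∩ Kˣ⁺` be the group of totally positive singular elements.  Then
`dim_{𝔽₂}(Z⁺/Kˣ²) = ρ⁺ + r₂`, where `ρ⁺ = rk₂(C_K⁺)` is the 2-rank of the narrow class
group of `K`. -/
theorem zplus_mod_squares_card (r₁ r₂ ρplus : ℕ)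
    (hr₁ : Nat.card {w : InfinitePlace K // w.IsReal} = r₁)
    (hr₂ : Nat.card {w : InfinitePlace K // w.IsComplex} = r₂)
    (hr₁pos : 0 < r₁)
    (hρplus : Nat.card {c : NarrowClassGroup K // c ^ 2 = 1} = 2 ^ ρplus) :
    Nat.card (ZPlusModSquares K) = 2 ^ (ρplus + r₂) := by
  rw [zplus_mod_squares_card_general, hρplus, pow_add, ← hr₂,
    InfinitePlace.nrComplexPlaces, Fintype.card_eq_nat_card]
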